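/- Programs are finite binary words, $|p|$ denotes the length of $p\in\{0,1\}^*$, and for $f,g:\mathbb N\to\mathbb N$ we write $f=_{\rm ct}g$ if there is a constant $c$ with $|f(n)-g(n)|\le c$ for all $n$. Let $\varphi_e$ be the partial recursive function $\mathbb N\rightharpoonup\mathbb N$ with Gödel number $e$, and let $\emptyset'=\{e:\varphi_e(e)\text{ converges}\}$. Let $PR(\mathbb N^2\to\mathbb N)$ be the set of partial recursive functions $\mathbb N^2\rightharpoonup\mathbb N$. A map $G:\{0,1\}^*\to PR(\mathbb N^2\to\mathbb N)$ is called effective if some total recursive function maps each $p$ to a Gödel number of $G(p)$. Let $U:\{0,1\}^*\to PR(\mathbb N^2\to\mathbb N)$ be strongly universal, i.e. $U$ is effective and there is a total recursive ${\tt comp}:\{0,1\}^*\times\{0,1\}^*\to\{0,1\}^*$ such that the maps $p\mapsto U({\tt comp}(e,p))$, $e\in\{0,1\}^*$, are exactly the effective maps $\{0,1\}^*\to PR(\mathbb N^2\to\mathbb N)$, and for each $e$ there is a constant $c(e)$ with $|{\tt comp}(e,p)|\le|p|+c(e)$ for all $p$. For $f\in PR(\mathbb N^2\to\mathbb N)$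 regard the domain of $f$ as a binary relation on $\mathbb N$, and let $\preceq_f$ be its reflexive–transitive closure on the set of integers occurring in pairs of this domain; the quotient order associated to $f$ is the quotient of $\preceq_f$ by the equivalence $x\preceq_f y\wedge y\preceq_f x$. Put $$K_{\rm ord}(n)=\min\{|p| : \text{the quotient order associated to } U(p) \text{ is a finite linear order with exactly } n \text{ elements}\}.$$ Let $V:\{0,1\}^*\times\mathbb N\rightharpoonup\mathbb N$ be strongly universal among the functions partial recursive in $\emptyset'$, i.e. $V$ is partial recursive in $\emptyset'$ and there is ${\tt comp}':\{0,1\}^*\times\{0,1\}^*\to\{0,1\}^*$, recursive in $\emptyset'$, such that the functions $(p,t)\mapsto V({\tt comp}'(e,p),t)$, $e\in\{0,1\}^*$, are exactly the functions $\{0,1\}^*\times\mathbb N\rightharpoonup\mathbb N$ partial recursive in $\emptyset'$, and for each $e$ there is a constant $c'(e)$ with $|{\tt comp}'(e,p)|\le|p|+c'(e)$ for all $p$. Reading convergence of $V(p,t)$ as "program $p$, with oracle $\emptyset'$, emits a symbol $1$ at step $t$ of its possibly infinite computation", put $$K'^{\infty}(n)=\min\{|p| : \{t : V(p,t)\text{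 converges}\} \text{ is finite with exactly } n \text{ elements}\}.$$ Then $K_{\rm ord}=_{\rm ct}K'^{\infty}$: the Kolmogorov complexity of the effective ordinal representation coincides, up to an additive constant, with Kolmogorov complexity allowing both the oracle $\emptyset'$ and possibly infinite computations with unary output. -/

import Mathlib

/-- Programs: finite binary words. -/
abbrev Word : Type := List Bool

/-- `f =ct g` : there is a constant `c` with `|f(n) − g(n)| ≤ c` for all `n`. -/
def EqCt (f g : ℕ → ℕ) : Prop := ∃ c : ℕ, ∀ n : ℕ, |(f n : ℤ) - (g n : ℤ)| ≤ (c : ℤ)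

/-- `φ_e`, the partial recursive function `ℕ ⇀ ℕ` with Gödel number `e`. -/
def phi (e : ℕ) : ℕ →. ℕ := (Denumerable.ofNat Nat.Partrec.Code e).eval

/-- The set `PR(ℕ²→ℕ)` of partial recursive functions `ℕ² ⇀ ℕ`. -/
def PRFun2 : Type := {f : ℕ × ℕ →. ℕ // Partrec f}

/-- A map `G : {0,1}* → PR(ℕ²→ℕ)` is partial-recursively given: some total recursive
function sends each program `p` to a Gödel number of `G p` (pairs of integers are coded
by the recursive pairing `Nat.pair`). -/
def PRGiven2 (G : Word → PRFun2) : Prop :=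
  ∃ h : Word → ℕ, Computable h ∧
    ∀ (p : Word) (x : ℕ × ℕ), (G p).val x = phi (h p) (Nat.pair x.1 x.2)

/-- `U : {0,1}* → PR(ℕ²→ℕ)` is a strongly universal enumeration: it is itself
partial-recursively given, and for some total recursive `comp` the family of the maps
`p ↦ U (comp e p)` enumerates exactly the partial-recursively given maps, where
`|comp e p| ≤ |p| + c(e)`. -/
def StronglyUniversal2 (U : Word → PRFun2) : Prop :=
  PRGiven2 U ∧
    ∃ comp : Word → Word → Word, Computable₂ comp ∧
      (Set.range fun (e : Word) (p : Word) => U (comp e p)) = {G : Word → PRFun2 | PRGiven2 G} ∧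
      (∀ e : Word, ∃ c : ℕ, ∀ p : Word, (comp e p).length ≤ p.length + c)

/-- The field of a binary relation on `ℕ`: the integers occurring in related pairs. -/
def FldR (r : ℕ → ℕ → Prop) : Set ℕ := {x : ℕ | ∃ y : ℕ, r x y ∨ r y x}

/-- The preorder generated by `r` : its reflexive–transitive closure. -/
def PreR (r : ℕ → ℕ → Prop) : ℕ → ℕ → Prop := Relation.ReflTransGen r

/-- The elements of the quotient order associated to `r` : the classes, in the field
of `r`, of the equivalence `x ∼ y ↔ x ⪯ y ∧ y ⪯ x`. -/
def ClassesR (r : ℕ → ℕ → Prop) : Set (Set ℕ) :=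
  {S : Set ℕ | ∃ x ∈ FldR r, S = {y ∈ FldR r | PreR r x y ∧ PreR r y x}}

/-- The quotient order associated to `r` is a finite linear order with exactly `n`
elements (the quotient of a preorder is linear iff the preorder is total). -/
def QuotLinCard (r : ℕ → ℕ → Prop) (n : ℕ) : Prop :=
  (∀ x ∈ FldR r, ∀ y ∈ FldR r, PreR r x y ∨ PreR r y x) ∧
    (ClassesR r).Finite ∧ (ClassesR r).ncard = n

/-- The domain of `f : ℕ² ⇀ ℕ`, viewed as a binary relation on `ℕ`. -/
def relOf (f : ℕ × ℕ →. ℕ) (x y : ℕ) : Prop := (f (x, y)).Dom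

/-- The ordinal Kolmogorov complexity: `K_ord(n)` is the least length of a program
`p` such that the quotient order associated to `U p` is a finite linear order
with exactly `n` elements. -/
noncomputable def Kord (U : Word → PRFun2) (n : ℕ) : ℕ :=
  sInf {k : ℕ | ∃ p : Word, p.length = k ∧ QuotLinCard (relOf (U p).val) n}

/-- The halting problem `{e : φ_e(e) converges}`. -/
def halting : Set ℕ := {e : ℕ | (phi e e).Dom}

open Classical in
/-- The characteristic function of a set of integers, as an oracle. -/
noncomputable def chi (A : Set ℕ) : ℕ →. ℕ :=
  fun n => Part.some (if n ∈ A then 1 else 0)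

/-- `V : {0,1}* × ℕ ⇀ ℕ` is a strongly universal function partial recursive in `A` :
it is partial recursive in `A`, and for some `comp` recursive in `A` (in particular,
`comp` may be any recursive function) the family of the functions
`(p, t) ↦ V (comp e p) t` enumerates exactly the functions partial recursive in `A`,
where `|comp e p| ≤ |p| + c(e)`. -/
def StronglyUniversal₂In (A : Set ℕ) (V : Word → ℕ →. ℕ) : Prop :=
  RecursiveIn₂ {chi A} V ∧
    ∃ comp : Word → Word → Word, ComputableIn₂ {chi A} comp ∧
      (Set.range fun (e : Word) (p : Word) => V (comp e p)) =
        {W : Word → ℕ →. ℕ | RecursiveIn₂ {chi A} W} ∧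
      (∀ e : Word, ∃ c : ℕ, ∀ p : Word, (comp e p).length ≤ p.length + c)

/-- Complexity for possibly infinite computations with unary output: convergence of
`V p t` is read as `program p emits a symbol 1 at step t`, and the value at `n` is the
least length of a program which emits exactly `n` symbols. -/
noncomputable def KInfOf (V : Word → ℕ →. ℕ) (n : ℕ) : ℕ :=
  sInf {k : ℕ | ∃ p : Word, p.length = k ∧
    {t : ℕ | (V p t).Dom}.Finite ∧ {t : ℕ | (V p t).Dom}.ncard = n}

/-!
The relation of a program for `K_ord` is recursively enumerable, hence so is its transitive closure,
and the least representatives of the classes form a difference of recursively enumerable sets. This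
set is `Σ₂`, so a program with oracle `∅'` can emit one symbol for each of its elements.

Conversely, the set of steps at which a program with oracle `∅'` emits a symbol is `Σ₂`. Drop its
least element and make the existential witness of membership unique: this gives an equinumerous set
`B` with recursively enumerable complement. The relation which holds when `x ≤ y`, and also between
`y + 1` and `y` once `y` is seen to be outside `B`, is recursively enumerable and has a linear
quotient order with `|B| + 1` elements. This needs a set with at least one element; the case `n = 0`
is absorbed by the additive constant.
-/

section RecursivelyEnumerable

open Encodable
open Nat.Partrec (Code)

theorem exists_succ_and_not_iff {p : ℕ → Prop} (h0 : ¬ p 0) :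
    (∃ n, p (n + 1) ∧ ¬ p n) ↔ ∃ n, p n := by
  refine ⟨fun ⟨n, hn, _⟩ => ⟨n + 1, hn⟩, fun ⟨n, hn⟩ => ?_⟩
  by_contra! h
  exact Nat.rec h0 (fun k ih => mt (h k) ih) n hn

theorem subsingleton_setOf_succ_and_not {p : ℕ → Prop} (hp : Monotone p) :
    {n | p (n + 1) ∧ ¬ p n}.Subsingleton := by
  intro m hm n hn
  by_contra hne
  rcases lt_or_gt_of_ne hne with hlt | hlt
  · exact hn.2 (hp hlt hm.1)
  · exact hm.2 (hp hlt hn.1)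

theorem dom_assert_some_iff {p : Prop} : (Part.assert p fun _ => Part.some ()).Dom ↔ p :=
  ⟨fun h => h.1, fun h => ⟨h, trivial⟩⟩

theorem reflTransGen_iff_exists_list {β : Type*} [Inhabited β] (r : β → β → Prop) (x y : β) :
    Relation.ReflTransGen r x y ↔ ∃ l : List β, (x :: l).getI l.length = y ∧
      ∀ i < l.length, r ((x :: l).getI i) (l.getI i) := by
  constructor
  · intro h
    induction h using Relation.ReflTransGen.head_induction_on with
    | refl => exact ⟨[], rfl, by simp⟩
    | @head x z hxz _ ih =>
      obtain ⟨l, hl, hr⟩ := ih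
      refine ⟨z :: l, hl, fun i hi => ?_⟩
      cases i with
      | zero => exact hxz
      | succ i => exact hr i (Nat.lt_of_succ_lt_succ hi)
  · rintro ⟨l, hl, hr⟩
    induction l generalizing x with
    | nil => exact hl ▸ .refl
    | cons z l ih =>
      exact .head (hr 0 l.length.succ_pos) (ih z hl fun i hi => hr (i + 1) (Nat.succ_lt_succ hi))

variable {α β : Type*} [Primcodable α] [Primcodable β]

theorem exists_computable_surjective (β : Type*) [Primcodable β] [Inhabited β] :
    ∃ g : ℕ → β, Computable g ∧ Function.Surjective g :=
  ⟨fun n => (decode n).getD default,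
    (Primrec.option_getD.comp Primrec.decode (Primrec.const default)).to_comp,
    fun b => ⟨encode b, by simp⟩⟩

theorem computablePred_comp {P : β → Prop} (hP : ComputablePred P) {f : α → β}
    (hf : Computable f) : ComputablePred fun a => P (f a) := by
  obtain ⟨g, hg, rfl⟩ := ComputablePred.computable_iff.1 hP
  exact ComputablePred.computable_iff.2 ⟨_, hg.comp hf, rfl⟩

theorem computablePred_and {P Q : α → Prop} (hP : ComputablePred P) (hQ : ComputablePred Q) :
    ComputablePred fun a => P a ∧ Q a := by
  obtain ⟨f, hf, rfl⟩ := ComputablePred.computable_iff.1 hP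
  obtain ⟨g, hg, rfl⟩ := ComputablePred.computable_iff.1 hQ
  exact ComputablePred.computable_iff.2
    ⟨fun a => f a && g a, Primrec.and.to_comp.comp hf hg, by simp⟩

theorem computablePred_eq {f g : α → β} (hf : Computable f) (hg : Computable g) :
    ComputablePred fun a => f a = g a := by
  classical
  exact computablePred_comp (P := fun x : β × β => x.1 = x.2) Primrec.eq.computablePred
    (hf.pair hg)

theorem exists_computablePred_stage {P : α → Prop} (hP : REPred P) :
    ∃ R : α × ℕ → Prop, ComputablePred R ∧ (∀ a, P a ↔ ∃ n, R (a, n)) ∧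
      ∀ a, {n | R (a, n)}.Subsingleton := by
  obtain ⟨c, hc⟩ := Code.exists_code.1 hP
  let halted (x : α × ℕ) : Prop := (c.evaln x.2 (encode x.1)).isSome
  have computable_halted : ComputablePred halted :=
    ComputablePred.computable_iff.2 ⟨_, (Primrec.option_isSome.comp (Code.primrec_evaln.comp
      ((Primrec.snd.pair (.const c)).pair (Primrec.encode.comp .fst)))).to_comp, rfl⟩
  have iff_halted (a : α) : P a ↔ ∃ n, halted (a, n) := by
    have dom_eval_iff : (c.eval (encode a)).Dom ↔ P a := by simp [hc, dom_assert_some_iff]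
    rw [← dom_eval_iff]
    simp only [halted, Part.dom_iff_mem, Code.evaln_complete, Option.isSome_iff_exists,
      Option.mem_def]
    exact exists_comm
  refine ⟨fun x => halted (x.1, x.2 + 1) ∧ ¬ halted x, ?_, fun a => ?_, fun a => ?_⟩
  · exact computablePred_and
      (computablePred_comp computable_halted (Computable.fst.pair (Computable.succ.comp .snd)))
      computable_halted.not
  · exact (iff_halted a).trans
      (exists_succ_and_not_iff (p := fun n => halted (a, n)) (by simp [halted, Code.evaln])).symm
  · refine subsingleton_setOf_succ_and_not (p := fun n => halted (a, n)) fun m n hmn h => ?_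
    obtain ⟨y, hy⟩ := Option.isSome_iff_exists.1 h
    exact Option.isSome_iff_exists.2 ⟨y, Code.evaln_mono hmn hy⟩

theorem rePred_comp {P : β → Prop} (hP : REPred P) {f : α → β} (hf : Computable f) :
    REPred fun a => P (f a) :=
  Partrec.comp hP hf

theorem rePred_and {P Q : α → Prop} (hP : REPred P) (hQ : REPred Q) :
    REPred fun a => P a ∧ Q a := by
  refine (Partrec.bind hP (Partrec.comp hQ Computable.fst).to₂).dom_re.of_eq fun a => ?_
  simp only [Part.bind_dom, dom_assert_some_iff, exists_prop]

theorem rePred_or {P Q : α → Prop} (hP : REPred P) (hQ : REPred Q) :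
    REPred fun a => P a ∨ Q a := by
  obtain ⟨k, hk, hkPQ⟩ := Partrec.merge' hP hQ
  exact hk.dom_re.of_eq fun a => by simpa only [dom_assert_some_iff] using (hkPQ a).2

theorem rePred_exists [Inhabited β] {P : α × β → Prop} (hP : REPred P) :
    REPred fun a => ∃ b, P (a, b) := by
  obtain ⟨R, hR, hPR, -⟩ := exists_computablePred_stage hP
  obtain ⟨R, computable_R, rfl⟩ := ComputablePred.computable_iff.1 hR
  obtain ⟨g, hg, hg_surj⟩ := exists_computable_surjective (β × ℕ)
  have hgn : Computable fun x : α × ℕ => g x.2 := hg.comp .snd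
  have hRg : Computable₂ fun (a : α) (n : ℕ) => R ((a, (g n).1), (g n).2) :=
    Computable.comp computable_R
      ((Computable.fst.pair (Computable.fst.comp hgn)).pair (Computable.snd.comp hgn))
  refine (Partrec.rfind hRg.partrec₂).dom_re.of_eq fun a => ?_
  have exists_iff : (∃ n, R ((a, (g n).1), (g n).2)) ↔ ∃ b, P (a, b) := by
    simp only [hPR, ← Prod.exists (p := fun x : β × ℕ => R ((a, x.1), x.2)), hg_surj.exists]
  simpa [Nat.rfind_dom] using exists_iff

theorem rePred_forall_lt {P : α × ℕ → Prop} (hP : REPred P) {m : α → ℕ} (hm : Computable m) :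
    REPred fun a => ∀ i < m a, P (a, i) := by
  have hP' : Partrec₂ fun (a : α) (x : ℕ × Unit) =>
      Part.assert (P (a, x.1)) fun _ => Part.some () :=
    Partrec.comp hP (Computable.fst.pair (Computable.fst.comp Computable.snd))
  refine (Partrec.nat_rec hm (Computable.const ()).partrec hP').dom_re.of_eq fun a => ?_
  induction m a with
  | zero => simp
  | succ n ih =>
    simp only [Part.bind_dom, dom_assert_some_iff, exists_prop]
    exact (and_congr_left' ih).trans Nat.forall_lt_succ_right.symm

theorem computablePred_path_end [Inhabited β] :
    ComputablePred fun z : (α × β × β) × List β =>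
      (z.1.2.1 :: z.2).getI z.2.length = z.1.2.2 :=
  computablePred_eq
    (Primrec.list_getI.comp (Primrec.list_cons.comp
      (Primrec.fst.comp (Primrec.snd.comp .fst)) .snd) (Primrec.list_length.comp .snd)).to_comp
    (Computable.snd.comp (Computable.snd.comp .fst))

theorem computable_path_edge [Inhabited β] :
    Computable fun z : ((α × β × β) × List β) × ℕ =>
      (z.1.1.1, (z.1.1.2.1 :: z.1.2).getI z.2, z.1.2.getI z.2) := by
  have hz : Primrec fun z : ((α × β × β) × List β) × ℕ => z.1.1 := Primrec.fst.comp .fst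
  have hl : Primrec fun z : ((α × β × β) × List β) × ℕ => z.1.2 := Primrec.snd.comp .fst
  exact ((Primrec.fst.comp hz).pair ((Primrec.list_getI.comp (Primrec.list_cons.comp
    (Primrec.fst.comp (Primrec.snd.comp hz)) hl) .snd).pair
    (Primrec.list_getI.comp hl .snd))).to_comp

theorem rePred_reflTransGen [Inhabited β] {r : α → β → β → Prop}
    (hr : REPred fun z : α × β × β => r z.1 z.2.1 z.2.2) :
    REPred fun z : α × β × β => Relation.ReflTransGen (r z.1) z.2.1 z.2.2 := by
  refine (rePred_exists (β := List β) (rePred_and computablePred_path_end.to_re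
    (rePred_forall_lt (rePred_comp hr computable_path_edge)
      (Primrec.list_length.comp .snd).to_comp))).of_eq fun z => ?_
  exact (reflTransGen_iff_exists_list (r z.1) z.2.1 z.2.2).symm

theorem exists_computable_phi_eq {f : α × β →. ℕ} (hf : Partrec f) :
    ∃ h : α → ℕ, Computable h ∧ ∀ a b, phi (h a) (encode b) = f (a, b) := by
  obtain ⟨c, hc⟩ := Code.exists_code.1 hf
  refine ⟨fun a => encode (c.curry (encode a)), ?_, fun a b => ?_⟩
  · exact (Primrec.encode.comp (Code.primrec₂_curry.comp (.const c) .encode)).to_comp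
  · simp [phi, Code.eval_curry, hc, Part.map_id']

theorem partrec_phi : Partrec₂ phi :=
  Code.eval_part.comp ((Computable.ofNat Code).comp .fst) .snd

theorem rePred_halting : REPred (· ∈ halting) :=
  (partrec_phi.comp .id .id).dom_re

theorem manyOneReducible_halting {P : α → Prop} (hP : REPred P) : P ≤₀ (· ∈ halting) := by
  have hf : Partrec fun x : α × ℕ => (Part.assert (P x.1) fun _ => Part.some ()).map fun _ => 0 :=
    (Partrec.comp hP Computable.fst).map (Computable.const 0)
  obtain ⟨h, hh, h_eq⟩ := exists_computable_phi_eq hf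
  refine ⟨h, hh, fun a => ?_⟩
  have phi_self : phi (h a) (h a) = (Part.assert (P a) fun _ => Part.some ()).map fun _ => 0 :=
    h_eq a (h a)
  change P a ↔ (phi (h a) (h a)).Dom
  rw [phi_self]
  exact dom_assert_some_iff.symm

end RecursivelyEnumerable

section Sigma2

variable {α β : Type*} [Primcodable α] [Primcodable β]

/-- `Σ₂` predicates of the arithmetical hierarchy, encoded as the projections along `ℕ` of the
complements of recursively enumerable predicates. -/
def IsSigma2 (S : α → Prop) : Prop :=
  ∃ P : α × ℕ → Prop, REPred P ∧ ∀ a, S a ↔ ∃ n, ¬ P (a, n)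

theorem IsSigma2.of_iff {S T : α → Prop} (hS : IsSigma2 S) (h : ∀ a, S a ↔ T a) : IsSigma2 T :=
  (funext fun a => propext (h a) : S = T) ▸ hS

theorem isSigma2_exists_not [Inhabited β] {P : α × β → Prop} (hP : REPred P) :
    IsSigma2 fun a => ∃ b, ¬ P (a, b) := by
  obtain ⟨g, hg, hg_surj⟩ := exists_computable_surjective β
  exact ⟨fun x => P (x.1, g x.2), rePred_comp hP (Computable.fst.pair (hg.comp .snd)),
    fun a => hg_surj.exists⟩

theorem isSigma2_not_of_rePred {P : α → Prop} (hP : REPred P) : IsSigma2 fun a => ¬ P a :=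
  (isSigma2_exists_not (β := Unit) (rePred_comp hP Computable.fst)).of_iff fun a =>
    exists_const (b := ¬ P a) Unit

theorem isSigma2_of_rePred {P : α → Prop} (hP : REPred P) : IsSigma2 P := by
  obtain ⟨R, hR, hPR, -⟩ := exists_computablePred_stage hP
  exact (isSigma2_exists_not hR.not.to_re).of_iff fun a => by simp only [hPR, not_not]

theorem IsSigma2.comp {S : β → Prop} (hS : IsSigma2 S) {f : α → β} (hf : Computable f) :
    IsSigma2 fun a => S (f a) := by
  obtain ⟨P, hP, hPS⟩ := hS
  exact ⟨fun x => P (f x.1, x.2), rePred_comp hP ((hf.comp .fst).pair .snd), fun a => hPS (f a)⟩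

theorem IsSigma2.or {S T : α → Prop} (hS : IsSigma2 S) (hT : IsSigma2 T) :
    IsSigma2 fun a => S a ∨ T a := by
  obtain ⟨P, hP, hPS⟩ := hS
  obtain ⟨Q, hQ, hQT⟩ := hT
  exact ⟨_, rePred_and hP hQ, fun a => by simp only [hPS, hQT, not_and_or, exists_or]⟩

theorem IsSigma2.and {S T : α → Prop} (hS : IsSigma2 S) (hT : IsSigma2 T) :
    IsSigma2 fun a => S a ∧ T a := by
  obtain ⟨P, hP, hPS⟩ := hS
  obtain ⟨Q, hQ, hQT⟩ := hT
  refine (isSigma2_exists_not (β := ℕ × ℕ) (rePred_or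
    (rePred_comp hP (Computable.fst.pair (Computable.fst.comp .snd)))
    (rePred_comp hQ (Computable.fst.pair (Computable.snd.comp .snd))))).of_iff fun a => ?_
  simp only [hPS, hQT, not_or, Prod.exists, exists_and_left, exists_and_right]

theorem IsSigma2.exists [Inhabited β] {S : α × β → Prop} (hS : IsSigma2 S) :
    IsSigma2 fun a => ∃ b, S (a, b) := by
  obtain ⟨P, hP, hPS⟩ := hS
  refine (isSigma2_exists_not (β := β × ℕ) (rePred_comp hP
    ((Computable.fst.pair (Computable.fst.comp .snd)).pair
      (Computable.snd.comp .snd)))).of_iff fun a => ?_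
  simp only [hPS, Prod.exists]

theorem forall_lt_exists_iff_exists_list {P : ℕ → ℕ → Prop} {m : ℕ} :
    (∀ i < m, ∃ n, P i n) ↔ ∃ l : List ℕ, ∀ i < m, P i (l.getI i) := by
  refine ⟨fun h => ?_, fun ⟨l, hl⟩ i hi => ⟨_, hl i hi⟩⟩
  choose! c hc using h
  exact ⟨(List.range m).map c, fun i hi => by simpa [List.getI_eq_getElem, hi] using hc i hi⟩

theorem IsSigma2.forall_lt {S : α × ℕ → Prop} (hS : IsSigma2 S) {m : α → ℕ} (hm : Computable m) :
    IsSigma2 fun a => ∀ i < m a, S (a, i) := by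
  obtain ⟨P, hP, hPS⟩ := hS
  have lt_re : REPred fun x : (α × List ℕ) × ℕ => x.2 < m x.1.1 :=
    rePred_comp (P := fun p : ℕ × ℕ => p.1 < p.2) Primrec.nat_lt.computablePred.to_re
      (Computable.snd.pair (hm.comp (Computable.fst.comp .fst)))
  have counterexample_re :
      REPred fun x : (α × List ℕ) × ℕ => P ((x.1.1, x.2), x.1.2.getI x.2) :=
    rePred_comp hP (((Computable.fst.comp .fst).pair .snd).pair
      (Primrec.list_getI.to_comp.comp (Computable.snd.comp .fst) .snd))
  refine (isSigma2_exists_not (rePred_exists (rePred_and lt_re counterexample_re))).of_iff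
    fun a => ?_
  simp only [hPS, forall_lt_exists_iff_exists_list, not_exists, not_and]

theorem IsSigma2.reflTransGen [Inhabited β] {r : α → β → β → Prop}
    (hr : IsSigma2 fun z : α × β × β => r z.1 z.2.1 z.2.2) :
    IsSigma2 fun z : α × β × β => Relation.ReflTransGen (r z.1) z.2.1 z.2.2 := by
  refine (IsSigma2.exists (β := List β) ((isSigma2_of_rePred computablePred_path_end.to_re).and
    ((hr.comp computable_path_edge).forall_lt
      (Primrec.list_length.comp .snd).to_comp))).of_iff fun z => ?_
  exact (reflTransGen_iff_exists_list (r z.1) z.2.1 z.2.2).symm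

end Sigma2

section Oracle

open Encodable Relation

theorem mem_natRec_iff_reflTransGen {β : Type*} {f : Part β} {h : ℕ → β → Part β} {n : ℕ} {y : β} :
    (y ∈ (n.rec f fun k IH => IH.bind (h k) : Part β)) ↔ ∃ v ∈ f,
      ReflTransGen (fun s t : ℕ × β => t.1 = s.1 + 1 ∧ t.2 ∈ h s.1 s.2) (0, v) (n, y) := by
  induction n generalizing y with
  | zero => simp [ReflTransGen.cases_tail_iff _ _ (0, y)]
  | succ n ih =>
    refine Part.mem_bind_iff.trans ⟨?_, ?_⟩
    · rintro ⟨z, hz, hy⟩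
      obtain ⟨v, hv, hvz⟩ := ih.1 hz
      exact ⟨v, hv, hvz.tail ⟨rfl, hy⟩⟩
    · rintro ⟨v, hv, hvy⟩
      obtain heq | ⟨⟨m, z⟩, hvz, hm, hy⟩ := ReflTransGen.cases_tail_iff _ _ _ |>.1 hvy
      · exact absurd (congrArg Prod.fst heq) n.succ_ne_zero
      · obtain rfl : n = m := Nat.succ_injective hm
        exact ⟨z, ih.2 ⟨v, hv, hvz⟩, hy⟩

theorem mem_rfind_map_eq_zero_iff {g : ℕ → Part ℕ} {y : ℕ} :
    (y ∈ Nat.rfind fun n => (fun m => decide (m = 0)) <$> g n) ↔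
      0 ∈ g y ∧ ∀ m < y, ∃ k, k + 1 ∈ g m := by
  refine Nat.mem_rfind.trans ?_
  simp only [Part.map_eq_map, Part.mem_map_iff, decide_eq_true_eq, decide_eq_false_iff_not,
    exists_eq_right]
  refine and_congr_right fun _ => forall₂_congr fun m _ => ⟨fun ⟨k, hk, h0⟩ => ?_, fun ⟨k, hk⟩ =>
    ⟨k + 1, hk, k.succ_ne_zero⟩⟩
  obtain ⟨j, rfl⟩ := Nat.exists_eq_succ_of_ne_zero h0
  exact ⟨j, hk⟩

theorem isSigma2_graph_chi {A : Set ℕ} (hA : REPred (· ∈ A)) :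
    IsSigma2 fun z : ℕ × ℕ => z.2 ∈ chi A z.1 := by
  have value_eq (k : ℕ) : IsSigma2 fun z : ℕ × ℕ => z.2 = k :=
    isSigma2_of_rePred (computablePred_eq .snd (.const k)).to_re
  refine (((value_eq 1).and ((isSigma2_of_rePred hA).comp .fst)).or
    ((value_eq 0).and ((isSigma2_not_of_rePred hA).comp .fst))).of_iff fun z => ?_
  by_cases hz : z.1 ∈ A <;> simp [chi, hz]

theorem isSigma2_graph_of_computable {f : ℕ → ℕ} (hf : Computable f) :
    IsSigma2 fun z : ℕ × ℕ => z.2 ∈ Part.some (f z.1) :=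
  (isSigma2_of_rePred (computablePred_eq .snd (hf.comp .fst)).to_re).of_iff
    fun _ => Part.mem_some_iff.symm

theorem isSigma2_graph_pair {f h : ℕ →. ℕ} (hf : IsSigma2 fun z : ℕ × ℕ => z.2 ∈ f z.1)
    (hh : IsSigma2 fun z : ℕ × ℕ => z.2 ∈ h z.1) :
    IsSigma2 fun z : ℕ × ℕ => z.2 ∈ (Nat.pair <$> f z.1 <*> h z.1) := by
  have hy : Computable fun z : ℕ × ℕ => z.2.unpair := Computable.unpair.comp .snd
  refine ((hf.comp (Computable.fst.pair (Computable.fst.comp hy))).and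
    (hh.comp (Computable.fst.pair (Computable.snd.comp hy)))).of_iff fun z => ?_
  simp only [Seq.seq, Part.map_eq_map, Part.mem_bind_iff, Part.mem_map_iff]
  constructor
  · rintro ⟨ha, hb⟩
    exact ⟨_, ⟨_, ha, rfl⟩, _, hb, Nat.pair_unpair _⟩
  · rintro ⟨_, ⟨a, ha, rfl⟩, b, hb, hz⟩
    rw [← hz]
    simpa using ⟨ha, hb⟩

theorem isSigma2_graph_comp {f h : ℕ →. ℕ} (hf : IsSigma2 fun z : ℕ × ℕ => z.2 ∈ f z.1)
    (hh : IsSigma2 fun z : ℕ × ℕ => z.2 ∈ h z.1) :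
    IsSigma2 fun z : ℕ × ℕ => z.2 ∈ (h z.1).bind f := by
  refine (IsSigma2.exists (β := ℕ)
    ((hh.comp ((Computable.fst.comp .fst).pair .snd)).and
    (hf.comp (Computable.snd.pair (Computable.snd.comp .fst))))).of_iff fun z => ?_
  exact (Part.mem_bind_iff (b := z.2) (f := h z.1) (g := f)).symm

theorem isSigma2_graph_prec {f h : ℕ →. ℕ} (hf : IsSigma2 fun z : ℕ × ℕ => z.2 ∈ f z.1)
    (hh : IsSigma2 fun z : ℕ × ℕ => z.2 ∈ h z.1) :
    IsSigma2 fun z : ℕ × ℕ => z.2 ∈ (z.1.unpair.2.rec (f z.1.unpair.1)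
      fun k IH => IH.bind fun i => h (Nat.pair z.1.unpair.1 (Nat.pair k i)) : Part ℕ) := by
  have step : IsSigma2 fun x : ℕ × (ℕ × ℕ) × (ℕ × ℕ) =>
      x.2.2.1 = x.2.1.1 + 1 ∧ x.2.2.2 ∈ h (Nat.pair x.1 (Nat.pair x.2.1.1 x.2.1.2)) := by
    have source : Computable fun x : ℕ × (ℕ × ℕ) × (ℕ × ℕ) => x.2.1 := Computable.fst.comp .snd
    have target : Computable fun x : ℕ × (ℕ × ℕ) × (ℕ × ℕ) => x.2.2 := Computable.snd.comp .snd
    refine (isSigma2_of_rePred (computablePred_eq (Computable.fst.comp target)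
      (Computable.succ.comp (Computable.fst.comp source))).to_re).and (hh.comp (Computable.pair ?_
        (Computable.snd.comp target)))
    exact Primrec₂.natPair.to_comp.comp .fst
      (Primrec₂.natPair.to_comp.comp (Computable.fst.comp source) (Computable.snd.comp source))
  have args : Computable fun x : (ℕ × ℕ) × ℕ => x.1.1.unpair :=
    Computable.unpair.comp (Computable.fst.comp .fst)
  have start := hf.comp (α := (ℕ × ℕ) × ℕ) ((Computable.fst.comp args).pair .snd)
  have path := (IsSigma2.reflTransGen (r := fun a s t => t.1 = s.1 + 1 ∧
    t.2 ∈ h (Nat.pair a (Nat.pair s.1 s.2))) step).comp (α := (ℕ × ℕ) × ℕ)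
    ((Computable.fst.comp args).pair (((Computable.const 0).pair .snd).pair
      ((Computable.snd.comp args).pair (Computable.snd.comp .fst))))
  refine (IsSigma2.exists (start.and path)).of_iff fun z => ?_
  exact (mem_natRec_iff_reflTransGen (f := f z.1.unpair.1) (n := z.1.unpair.2) (y := z.2)
    (h := fun k i => h (Nat.pair z.1.unpair.1 (Nat.pair k i)))).symm

theorem isSigma2_graph_rfind {f : ℕ →. ℕ} (hf : IsSigma2 fun z : ℕ × ℕ => z.2 ∈ f z.1) :
    IsSigma2 fun z : ℕ × ℕ => z.2 ∈ Nat.rfind fun n =>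
      (fun m => decide (m = 0)) <$> f (Nat.pair z.1 n) := by
  have zero : IsSigma2 fun z : ℕ × ℕ => 0 ∈ f (Nat.pair z.1 z.2) :=
    hf.comp ((Primrec₂.natPair.to_comp.comp .fst .snd).pair (.const 0))
  have succ : IsSigma2 fun x : ((ℕ × ℕ) × ℕ) × ℕ => x.2 + 1 ∈ f (Nat.pair x.1.1.1 x.1.2) :=
    hf.comp ((Primrec₂.natPair.to_comp.comp
      (Computable.fst.comp (Computable.fst.comp .fst)) (Computable.snd.comp .fst)).pair
      (Computable.succ.comp .snd))
  exact (zero.and (succ.exists.forall_lt .snd)).of_iff fun z =>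
    (mem_rfind_map_eq_zero_iff (g := fun n => f (Nat.pair z.1 n))).symm

theorem isSigma2_graph_of_recursiveIn {A : Set ℕ} (hA : REPred (· ∈ A)) {f : ℕ →. ℕ}
    (hf : Nat.RecursiveIn {chi A} f) : IsSigma2 fun z : ℕ × ℕ => z.2 ∈ f z.1 := by
  induction hf with
  | zero => exact isSigma2_graph_of_computable (.const 0)
  | succ => exact isSigma2_graph_of_computable .succ
  | left => exact isSigma2_graph_of_computable (Computable.fst.comp .unpair)
  | right => exact isSigma2_graph_of_computable (Computable.snd.comp .unpair)
  | oracle g hg => exact (Set.mem_singleton_iff.1 hg) ▸ isSigma2_graph_chi hA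
  | pair _ _ ihf ihh => exact isSigma2_graph_pair ihf ihh
  | comp _ _ ihf ihh => exact isSigma2_graph_comp ihf ihh
  | prec _ _ ihf ihh => exact isSigma2_graph_prec ihf ihh
  | rfind _ ihf => exact isSigma2_graph_rfind ihf

variable {α : Type*} [Primcodable α]

theorem isSigma2_dom_of_recursiveIn {A : Set ℕ} (hA : REPred (· ∈ A)) {f : α →. ℕ}
    (hf : RecursiveIn {chi A} f) : IsSigma2 fun a => (f a).Dom := by
  refine (IsSigma2.exists (β := ℕ) ((isSigma2_graph_of_recursiveIn hA hf).comp
    (f := fun x : α × ℕ => (encode x.1, x.2))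
    ((Computable.encode.comp .fst).pair .snd))).of_iff fun a => ?_
  simp [Part.dom_iff_mem]

theorem recursiveIn_comp_encode {O : Set (ℕ →. ℕ)} {f : ℕ →. ℕ} (hf : Nat.RecursiveIn O f) :
    RecursiveIn O fun a : α => f (encode a) := by
  have decodable : Nat.Partrec _ := (Computable.id : Computable (id : α → α))
  refine (hf.comp decodable.recursiveIn).of_eq fun n => ?_
  refine (Part.bind_assoc _ _ f).trans (congrArg (Part.bind _) (funext fun a => ?_))
  exact (Part.bind_some (encode a) f).trans (Part.map_id' (fun _ => rfl) _).symm

theorem IsSigma2.exists_recursiveIn_halting {S : α → Prop} (hS : IsSigma2 S) :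
    ∃ f : α →. ℕ, RecursiveIn {chi halting} f ∧ ∀ a, (f a).Dom ↔ S a := by
  obtain ⟨P, hP, hPS⟩ := hS
  obtain ⟨i, hi, hiP⟩ := manyOneReducible_halting hP
  let j (m : ℕ) : ℕ := ((decode m : Option (α × ℕ)).map i).getD 0
  have hj : Computable j :=
    Computable.option_getD (Computable.option_map .decode (hi.comp .snd).to₂) (.const 0)
  have hquery : Nat.RecursiveIn {chi halting} fun m => chi halting (j m) :=
    (Nat.RecursiveIn.comp (.oracle _ (Set.mem_singleton _))
      (Partrec.nat_iff.1 hj).recursiveIn).of_eq fun m => Part.bind_some (j m) (chi halting)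
  refine ⟨_, recursiveIn_comp_encode hquery.rfind, fun a => Nat.rfind_dom.trans ?_⟩
  have j_pair (k : ℕ) : j (Nat.pair (encode a) k) = i (a, k) := by simp [j]
  simp [j_pair, chi, hPS, hiP]

end Oracle

section Uniformization

variable {α : Type*} [Primcodable α]

/-- A witness is made unique by pairing it with the stage at which every smaller candidate is seen
to be refuted. -/
theorem IsSigma2.exists_unique_witness {S : α → Prop} (hS : IsSigma2 S) :
    ∃ P : α × ℕ → Prop, REPred P ∧ (∀ a, S a ↔ ∃ n, ¬ P (a, n)) ∧
      ∀ a, {n | ¬ P (a, n)}.Subsingleton := by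
  obtain ⟨P, hP, hPS⟩ := hS
  have refuted_below : REPred fun x : α × ℕ => ∀ i < x.2, P (x.1, i) :=
    rePred_forall_lt (rePred_comp hP ((Computable.fst.comp .fst).pair .snd)) .snd
  obtain ⟨R, hR, refuted_iff, stage_unique⟩ := exists_computablePred_stage refuted_below
  have candidate : Computable fun x : α × ℕ => (x.1, x.2.unpair.1) :=
    Computable.fst.pair (Computable.fst.comp (Computable.unpair.comp .snd))
  have stage : Computable fun x : α × ℕ => x.2.unpair.2 :=
    Computable.snd.comp (Computable.unpair.comp .snd)
  refine ⟨fun x => P (x.1, x.2.unpair.1) ∨ ¬ R ((x.1, x.2.unpair.1), x.2.unpair.2),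
    rePred_or (rePred_comp hP candidate) (computablePred_comp hR (candidate.pair stage)).not.to_re,
    fun a => ?_, fun a => ?_⟩
  · simp only [hPS, not_or, not_not]
    constructor
    · intro h
      classical
      obtain ⟨s, hs⟩ := (refuted_iff (a, Nat.find h)).1 fun i hi => not_not.1 (Nat.find_min h hi)
      exact ⟨Nat.pair (Nat.find h) s, by simpa using ⟨Nat.find_spec h, hs⟩⟩
    · exact fun ⟨m, hm⟩ => ⟨_, hm.1⟩
  · simp only [not_or, not_not]
    have candidate_le {m n : ℕ} (hm : ¬ P (a, m.unpair.1))
        (hn : R ((a, n.unpair.1), n.unpair.2)) : n.unpair.1 ≤ m.unpair.1 :=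
      not_lt.1 fun hlt => hm ((refuted_iff (a, n.unpair.1)).2 ⟨_, hn⟩ _ hlt)
    intro m hm n hn
    have candidate_eq := le_antisymm (candidate_le hn.1 hm.2) (candidate_le hm.1 hn.2)
    have hn' : R ((a, m.unpair.1), n.unpair.2) := candidate_eq ▸ hn.2
    exact Nat.pairEquiv.symm.injective
      (Prod.ext candidate_eq (stage_unique (a, m.unpair.1) hm.2 hn'))

theorem IsSigma2.exists_bijOn {S : α × ℕ → Prop} (hS : IsSigma2 S) :
    ∃ P : α × ℕ → Prop, REPred P ∧
      ∀ a, Set.BijOn (fun x => x.unpair.1) {x | ¬ P (a, x)} {t | S (a, t)} := by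
  obtain ⟨P, hP, hPS, witness_unique⟩ := hS.exists_unique_witness
  refine ⟨fun x => P ((x.1, x.2.unpair.1), x.2.unpair.2), rePred_comp hP
    ((Computable.fst.pair (Computable.fst.comp (Computable.unpair.comp .snd))).pair
      (Computable.snd.comp (Computable.unpair.comp .snd))),
    fun a => ⟨fun x hx => (hPS _).2 ⟨_, hx⟩, fun x hx y hy hxy => ?_, fun t ht => ?_⟩⟩
  · have fst_eq : x.unpair.1 = y.unpair.1 := hxy
    have hy' : ¬ P ((a, x.unpair.1), y.unpair.2) := fst_eq ▸ hy
    exact Nat.pairEquiv.symm.injective (Prod.ext fst_eq (witness_unique (a, x.unpair.1) hx hy'))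
  · obtain ⟨n, hn⟩ := (hPS (a, t)).1 ht
    exact ⟨Nat.pair t n, by simpa using hn, by simp⟩

end Uniformization

section QuotientOrder

theorem PreR.mem_FldR {r : ℕ → ℕ → Prop} {x y : ℕ} (h : PreR r x y) (hx : x ∈ FldR r) :
    y ∈ FldR r := by
  rcases Relation.ReflTransGen.cases_tail h with rfl | ⟨z, -, hz⟩
  · exact hx
  · exact ⟨z, Or.inr hz⟩

/-- The least representatives of the classes of the quotient order associated to `r`; counting them
counts the classes. -/
def leastReps (r : ℕ → ℕ → Prop) : Set ℕ :=
  {x ∈ FldR r | ∀ y < x, ¬ (PreR r x y ∧ PreR r y x)}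

theorem leastReps_bijOn_ClassesR (r : ℕ → ℕ → Prop) :
    Set.BijOn (fun x => {y ∈ FldR r | PreR r x y ∧ PreR r y x}) (leastReps r) (ClassesR r) := by
  refine ⟨fun x hx => ⟨x, hx.1, rfl⟩, ?_, ?_⟩
  · intro x hx y hy (hxy : {z ∈ FldR r | _} = {z ∈ FldR r | _})
    have h : x ∈ {z ∈ FldR r | PreR r y z ∧ PreR r z y} := hxy ▸ ⟨hx.1, .refl, .refl⟩
    rcases lt_trichotomy x y with hlt | heq | hlt
    · exact absurd h.2 (hy.2 x hlt)
    · exact heq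
    · exact absurd h.2.symm (hx.2 y hlt)
  · rintro _ ⟨x, hx, rfl⟩
    classical
    have hex : ∃ y, PreR r x y ∧ PreR r y x := ⟨x, .refl, .refl⟩
    obtain ⟨h1, h2⟩ := Nat.find_spec hex
    refine ⟨Nat.find hex, ⟨h1.mem_FldR hx, fun y hy h => ?_⟩, ?_⟩
    · exact Nat.find_min hex hy ⟨h1.trans h.1, h.2.trans h2⟩
    · ext y
      exact and_congr_right fun _ =>
        ⟨fun h => ⟨h1.trans h.1, h.2.trans h2⟩, fun h => ⟨h2.trans h.1, h.2.trans h1⟩⟩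

theorem finite_and_ncard_eq_iff_encard_eq {γ : Type*} {s : Set γ} {n : ℕ} :
    s.Finite ∧ s.ncard = n ↔ s.encard = n :=
  ⟨fun h => by rw [← h.1.cast_ncard_eq, h.2], fun h =>
    ⟨Set.finite_of_encard_eq_coe h, by simp [Set.ncard, h]⟩⟩

theorem quotLinCard_iff {r : ℕ → ℕ → Prop} {n : ℕ} :
    QuotLinCard r n ↔ (∀ x ∈ FldR r, ∀ y ∈ FldR r, PreR r x y ∨ PreR r y x) ∧
      (leastReps r).encard = n := by
  rw [QuotLinCard, finite_and_ncard_eq_iff_encard_eq, ← (leastReps_bijOn_ClassesR r).image_eq,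
    (leastReps_bijOn_ClassesR r).injOn.encard_image]

theorem isSigma2_leastReps {α : Type*} [Primcodable α] {r : α → ℕ → ℕ → Prop}
    (hr : REPred fun z : α × ℕ × ℕ => r z.1 z.2.1 z.2.2) :
    IsSigma2 fun z : α × ℕ => z.2 ∈ leastReps (r z.1) := by
  have param : Computable fun z : (α × ℕ) × ℕ => z.1.1 := Computable.fst.comp .fst
  have vertex : Computable fun z : (α × ℕ) × ℕ => z.1.2 := Computable.snd.comp .fst
  have field : REPred fun z : α × ℕ => z.2 ∈ FldR (r z.1) :=
    rePred_exists (rePred_or (rePred_comp hr (param.pair (vertex.pair .snd)))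
      (rePred_comp hr (param.pair (Computable.snd.pair vertex))))
  have path : REPred fun z : α × ℕ × ℕ => PreR (r z.1) z.2.1 z.2.2 := rePred_reflTransGen hr
  have lt : REPred fun z : (α × ℕ) × ℕ => z.2 < z.1.2 :=
    rePred_comp (P := fun p : ℕ × ℕ => p.1 < p.2) Primrec.nat_lt.computablePred.to_re
      (Computable.snd.pair vertex)
  have equiv_smaller :
      REPred fun z : α × ℕ => ∃ y, y < z.2 ∧ PreR (r z.1) z.2 y ∧ PreR (r z.1) y z.2 :=
    rePred_exists (rePred_and lt (rePred_and (rePred_comp path (param.pair (vertex.pair .snd)))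
      (rePred_comp path (param.pair (Computable.snd.pair vertex)))))
  refine ((isSigma2_of_rePred field).and (isSigma2_not_of_rePred equiv_smaller)).of_iff fun z => ?_
  simp only [leastReps, Set.mem_ofPred_eq, not_exists, not_and]

end QuotientOrder

section CollapsedOrder

/-- The order of the natural numbers in which `y` and `y + 1` are identified for every `y ∉ B`, so
that the classes are separated by the elements of `B`. -/
def collapseRel (B : Set ℕ) (x y : ℕ) : Prop := x ≤ y ∨ x = y + 1 ∧ y ∉ B

theorem FldR_collapseRel (B : Set ℕ) : FldR (collapseRel B) = Set.univ :=
  Set.eq_univ_of_forall fun x => ⟨x, Or.inl (Or.inl le_rfl)⟩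

theorem PreR_collapseRel_of_le (B : Set ℕ) {x y : ℕ} (h : x ≤ y) : PreR (collapseRel B) x y :=
  Relation.ReflTransGen.single (Or.inl h)

theorem PreR_collapseRel_iff (B : Set ℕ) (x y : ℕ) :
    PreR (collapseRel B) x y ↔ ∀ z, y ≤ z → z < x → z ∉ B := by
  constructor
  · intro h
    induction h with
    | refl => intro z h1 h2; omega
    | tail _ hwy ih =>
      intro z h1 h2
      rcases hwy with hle | ⟨rfl, hB⟩
      · exact ih z (hle.trans h1) h2
      · rcases h1.eq_or_lt with rfl | hlt
        · exact hB
        · exact ih z hlt h2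
  · intro h
    induction x with
    | zero => exact PreR_collapseRel_of_le B (Nat.zero_le y)
    | succ x ih =>
      rcases le_or_gt (x + 1) y with hle | hlt
      · exact PreR_collapseRel_of_le B hle
      · exact .head (Or.inr ⟨rfl, h x (Nat.lt_succ_iff.1 hlt) x.lt_succ_self⟩)
          (ih fun z h1 h2 => h z h1 (h2.trans x.lt_succ_self))

theorem leastReps_collapseRel (B : Set ℕ) :
    leastReps (collapseRel B) = insert 0 (Nat.succ '' B) := by
  ext x
  simp only [leastReps, FldR_collapseRel, Set.mem_univ, true_and, PreR_collapseRel_iff,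
    Set.mem_insert_iff, Set.mem_image, Set.mem_ofPred_eq]
  cases x with
  | zero => simp
  | succ x =>
    simp only [Nat.succ_eq_add_one, Nat.add_right_cancel_iff, exists_eq_right]
    constructor
    · intro h
      by_contra hx
      refine h x x.lt_succ_self ⟨fun z h1 h2 => ?_, fun z h1 h2 => by omega⟩
      obtain rfl : z = x := by omega
      simpa using hx
    · rintro (h | h)
      · omega
      · exact fun y hy hxy => hxy.1 x (Nat.lt_succ_iff.1 hy) x.lt_succ_self h

theorem quotLinCard_collapseRel {B : Set ℕ} {n : ℕ} (hB : B.encard + 1 = n) :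
    QuotLinCard (collapseRel B) n := by
  refine quotLinCard_iff.2 ⟨fun x _ y _ =>
    (le_total x y).imp (PreR_collapseRel_of_le B) (PreR_collapseRel_of_le B), ?_⟩
  rw [leastReps_collapseRel, Set.encard_insert_of_notMem (by simp), Nat.succ_injective.encard_image,
    hB]

theorem rePred_collapseRel {α : Type*} [Primcodable α] {P : α × ℕ → Prop} (hP : REPred P) :
    REPred fun z : α × ℕ × ℕ => collapseRel {x | ¬ P (z.1, x)} z.2.1 z.2.2 := by
  have source : Computable fun z : α × ℕ × ℕ => z.2.1 := Computable.fst.comp .snd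
  have target : Computable fun z : α × ℕ × ℕ => z.2.2 := Computable.snd.comp .snd
  refine (rePred_or (rePred_comp (P := fun p : ℕ × ℕ => p.1 ≤ p.2)
    Primrec.nat_le.computablePred.to_re (source.pair target)) (rePred_and
      (computablePred_eq source (Computable.succ.comp target)).to_re
      (rePred_comp hP (Computable.fst.pair target)))).of_eq fun z => ?_
  simp only [collapseRel, Set.mem_ofPred_eq, not_not]

theorem encard_setOf_exists_lt_add_one {s : Set ℕ} (hs : s.Nonempty) :
    {t ∈ s | ∃ u ∈ s, u < t}.encard + 1 = s.encard := by
  classical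
  have eq_sdiff : {t ∈ s | ∃ u ∈ s, u < t} = s \ {Nat.find hs} := by
    refine Set.ext fun t => and_congr_right fun ht => ⟨?_, fun h => ?_⟩
    · rintro ⟨u, hu, hut⟩ rfl
      exact Nat.find_min hs hut hu
    · exact ⟨_, Nat.find_spec hs, lt_of_le_of_ne (Nat.find_min' hs ht) (Ne.symm h)⟩
  rw [eq_sdiff, Set.encard_sdiff_singleton_add_one (Nat.find_spec hs)]

theorem IsSigma2.and_exists_lt {α : Type*} [Primcodable α] {S : α × ℕ → Prop} (hS : IsSigma2 S) :
    IsSigma2 fun z : α × ℕ => S z ∧ ∃ u, S (z.1, u) ∧ u < z.2 := by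
  have lt : IsSigma2 fun p : ℕ × ℕ => p.1 < p.2 :=
    isSigma2_of_rePred Primrec.nat_lt.computablePred.to_re
  exact hS.and (IsSigma2.exists ((hS.comp ((Computable.fst.comp .fst).pair .snd)).and
    (lt.comp (Computable.snd.pair (Computable.snd.comp .fst)))))

end CollapsedOrder

section Complexity

theorem rePred_relOf {G : Word → PRFun2} (hG : PRGiven2 G) :
    REPred fun z : Word × ℕ × ℕ => relOf (G z.1).val z.2.1 z.2.2 := by
  obtain ⟨h, hh, hGh⟩ := hG
  refine (partrec_phi.comp (hh.comp .fst) (Primrec₂.natPair.to_comp.comp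
    (Computable.fst.comp .snd) (Computable.snd.comp .snd))).dom_re.of_eq fun z => ?_
  rw [relOf, hGh]

theorem exists_PRGiven2_relOf_eq {r : Word → ℕ → ℕ → Prop}
    (hr : REPred fun z : Word × ℕ × ℕ => r z.1 z.2.1 z.2.2) :
    ∃ G, PRGiven2 G ∧ ∀ p, relOf (G p).val = r p := by
  have hf : Partrec fun z : Word × ℕ × ℕ =>
      (Part.assert (r z.1 z.2.1 z.2.2) fun _ => Part.some ()).map fun _ => 0 :=
    Partrec.map hr (Computable.const 0)
  obtain ⟨h, hh, phi_eq⟩ := exists_computable_phi_eq hf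
  refine ⟨fun p => ⟨_, hf.comp ((Computable.const p).pair .id)⟩,
    ⟨h, hh, fun p x => (phi_eq p x).symm⟩, fun p => ?_⟩
  funext x y
  exact propext dom_assert_some_iff

theorem exists_eq_and_length_le {γ : Type*} {U : Word → γ} {comp : Word → Word → Word}
    {S : Set (Word → γ)} (range_eq : (Set.range fun e p => U (comp e p)) = S)
    (length_le : ∀ e, ∃ c : ℕ, ∀ p, (comp e p).length ≤ p.length + c) {G : Word → γ} (hG : G ∈ S) :
    ∃ c : ℕ, ∀ p, ∃ q, U q = G p ∧ q.length ≤ p.length + c := by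
  obtain ⟨e, he⟩ := range_eq.symm ▸ hG
  obtain ⟨c, hc⟩ := length_le e
  exact ⟨c, fun p => ⟨comp e p, congrFun he p, hc p⟩⟩

theorem exists_emits_of_quotLinCard {U : Word → PRFun2} (hU : PRGiven2 U)
    {V : Word → ℕ →. ℕ} (hV : StronglyUniversal₂In halting V) :
    ∃ c, ∀ (n : ℕ) (p : Word), QuotLinCard (relOf (U p).val) n → ∃ q : Word,
      ({t | (V q t).Dom}.Finite ∧ {t | (V q t).Dom}.ncard = n) ∧ q.length ≤ p.length + c := by
  have leastReps_sigma2 : IsSigma2 fun z : Word × ℕ => z.2 ∈ leastReps (relOf (U z.1).val) :=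
    isSigma2_leastReps (r := fun p => relOf (U p).val) (rePred_relOf hU)
  obtain ⟨W, hW, dom_W⟩ := leastReps_sigma2.exists_recursiveIn_halting
  obtain ⟨-, comp, -, range_eq, length_le⟩ := hV
  obtain ⟨c, hc⟩ := exists_eq_and_length_le range_eq length_le (G := fun p t => W (p, t)) hW
  refine ⟨c, fun n p hp => ?_⟩
  obtain ⟨q, hq, hqp⟩ := hc p
  have dom_eq : {t | (V q t).Dom} = leastReps (relOf (U p).val) := by
    ext t
    rw [Set.mem_ofPred_eq, hq, dom_W]
  exact ⟨q, finite_and_ncard_eq_iff_encard_eq.2 (dom_eq ▸ (quotLinCard_iff.1 hp).2), hqp⟩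

theorem exists_quotLinCard_of_emits {U : Word → PRFun2} (hU : StronglyUniversal2 U)
    {V : Word → ℕ →. ℕ} (hV : RecursiveIn₂ {chi halting} V) :
    ∃ c, ∀ (n : ℕ) (p : Word), n ≠ 0 → {t | (V p t).Dom}.Finite ∧ {t | (V p t).Dom}.ncard = n →
      ∃ q : Word, QuotLinCard (relOf (U q).val) n ∧ q.length ≤ p.length + c := by
  have dom_sigma2 : IsSigma2 fun z : Word × ℕ => (V z.1 z.2).Dom :=
    isSigma2_dom_of_recursiveIn rePred_halting hV
  obtain ⟨P, hP, bijOn⟩ := dom_sigma2.and_exists_lt.exists_bijOn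
  obtain ⟨G, hG, relOf_G⟩ :=
    exists_PRGiven2_relOf_eq (r := fun p => collapseRel {x | ¬ P (p, x)}) (rePred_collapseRel hP)
  obtain ⟨-, comp, -, range_eq, length_le⟩ := hU
  obtain ⟨c, hc⟩ := exists_eq_and_length_le range_eq length_le (G := G) hG
  refine ⟨c, fun n p hn hp => ?_⟩
  obtain ⟨q, hq, hqp⟩ := hc p
  refine ⟨q, ?_, hqp⟩
  have card_dom : {t | (V p t).Dom}.encard = n := finite_and_ncard_eq_iff_encard_eq.1 hp
  have dom_nonempty : {t | (V p t).Dom}.Nonempty := Set.nonempty_of_ncard_ne_zero (hp.2 ▸ hn)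
  rw [hq, relOf_G]
  refine quotLinCard_collapseRel ?_
  rw [← (bijOn p).injOn.encard_image, (bijOn p).image_eq, ← card_dom]
  exact encard_setOf_exists_lt_add_one dom_nonempty

/-- The least length of a program with the property `D`, the common shape of all Kolmogorov
complexities. Its value is `0` if no program has the property. -/
noncomputable def minLength (D : Word → Prop) : ℕ := sInf {k | ∃ p : Word, p.length = k ∧ D p}

theorem minLength_le_add {D E : Word → Prop} {c : ℕ} (exists_of_exists : (∃ q, E q) → ∃ p, D p)
    (hDE : ∀ p, D p → ∃ q, E q ∧ q.length ≤ p.length + c) : minLength E ≤ minLength D + c := by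
  by_cases hE : ∃ q, E q
  · obtain ⟨p₀, hp₀⟩ := exists_of_exists hE
    obtain ⟨p, hp, hDp⟩ : ∃ p : Word, p.length = minLength D ∧ D p :=
      Nat.sInf_mem (s := {k | ∃ p : Word, p.length = k ∧ D p}) ⟨_, p₀, rfl, hp₀⟩
    obtain ⟨q, hEq, hqp⟩ := hDE p hDp
    exact hp ▸ (Nat.sInf_le ⟨q, rfl, hEq⟩ : minLength E ≤ q.length).trans hqp
  · have minLength_eq_zero : minLength E = 0 :=
      Nat.sInf_eq_zero.2 (Or.inr (Set.eq_empty_of_forall_notMem fun _ ⟨q, _, hq⟩ => hE ⟨q, hq⟩))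
    exact minLength_eq_zero ▸ Nat.zero_le _

theorem eqCt_of_forall_ne_zero {f g : ℕ → ℕ} {c₁ c₂ : ℕ} (hfg : ∀ n ≠ 0, f n ≤ g n + c₁)
    (hgf : ∀ n ≠ 0, g n ≤ f n + c₂) : EqCt f g := by
  refine ⟨c₁ + c₂ + f 0 + g 0, fun n => ?_⟩
  rcases eq_or_ne n 0 with rfl | hn
  · rw [abs_le]
    omega
  · have := hfg n hn
    have := hgf n hn
    rw [abs_le]
    omega

end Complexity

/-- `K_ord =ct K'^∞`, where `K_ord` is computed with any strongly universal enumeration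
`U` of the partial recursive functions `ℕ² ⇀ ℕ`, and `K'^∞` with any strongly universal
function `V` partial recursive in the halting problem. -/
theorem stmt15 (U : Word → PRFun2) (hU : StronglyUniversal2 U)
    (V : Word → ℕ →. ℕ) (hV : StronglyUniversal₂In halting V) :
    EqCt (Kord U) (KInfOf V) := by
  obtain ⟨c₁, emits_of_quotLinCard⟩ := exists_emits_of_quotLinCard hU.1 hV
  obtain ⟨c₂, quotLinCard_of_emits⟩ := exists_quotLinCard_of_emits hU hV.1
  refine eqCt_of_forall_ne_zero (c₁ := c₂) (c₂ := c₁) (fun n hn => ?_) fun n hn => ?_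
  · exact minLength_le_add (fun ⟨q, hq⟩ => (emits_of_quotLinCard n q hq).imp fun _ => And.left)
      fun p hp => quotLinCard_of_emits n p hn hp
  · exact minLength_le_add (fun ⟨q, hq⟩ => (quotLinCard_of_emits n q hn hq).imp fun _ => And.left)
      fun p hp => emits_of_quotLinCard n p hp
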